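/- Let H be a group acting by bijections on the circle ℝ/ℤ such that every h ∈ H maps ordered triples to ordered triples, and such that H acts transitively on ordered triples (for any two ordered triples (a,b,c) and (a′,b′,c′) there is h ∈ H with h·a = a′, h·b = b′, h·c = c′). Let R be an H-invariant anti-symmetric cross ratio on ℝ/ℤ. Then there is a constant k ∈ ℝ such that R(a,b,c,d) = k·R₀(a,b,c,d) for every quadruple (a,b,c,d) of pairwise distinct points; in particular R(a,b,c,d) = 0 whenever (a,b,c,d) is ordered and R(a,b,c,d) = k whenever (a,c,b,d) is ordered. -/

import Mathlib

/-!
If `(a, b, c, d)` is cyclically ordered, so are `(c, d, a)` and `(c, d, b)`; the transformation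
fixing `c` and `d` and taking `a` to `b` produces a cyclically ordered `(a, b', c, d)` at which `R`
takes twice its value at `(a, b, c, d)`. Thus the set of values of `R` at cyclically ordered
quadruples is closed under doubling, and being bounded it is contained in `{0}`. By additivity,
`R a b c d` with `(a, c, b, d)` cyclically ordered then does not depend on `d`, and transitivity on
ordered triples moves `(a, c, b)` anywhere. Swapping points within the two pairs brings every
quadruple of distinct points into one of these two positions.
-/

/-- The circle `ℝ/ℤ`. -/
abbrev Circle1 := AddCircle (1 : ℝ)

/-- Pairwise distinctness of three points. -/
def PD3 {X : Type*} (a b c : X) : Prop := a ≠ b ∧ a ≠ c ∧ b ≠ c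

/-- Pairwise distinctness of four points. -/
def PD4 {X : Type*} (a b c d : X) : Prop :=
  a ≠ b ∧ a ≠ c ∧ a ≠ d ∧ b ≠ c ∧ b ≠ d ∧ c ≠ d

/-- Pairwise distinctness of five points. -/
def PD5 {X : Type*} (a b c d e : X) : Prop :=
  a ≠ b ∧ a ≠ c ∧ a ≠ d ∧ a ≠ e ∧ b ≠ c ∧ b ≠ d ∧ b ≠ e ∧ c ≠ d ∧ c ≠ e ∧ d ≠ e

/-- A triple of points of `ℝ/ℤ` is ordered if it lifts to reals
`t₁ < t₂ < t₃ < t₁ + 1`. -/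
def Ordered3 (a b c : Circle1) : Prop :=
  ∃ t₁ t₂ t₃ : ℝ, t₁ < t₂ ∧ t₂ < t₃ ∧ t₃ < t₁ + 1 ∧
    a = (t₁ : Circle1) ∧ b = (t₂ : Circle1) ∧ c = (t₃ : Circle1)

/-- A quadruple of points of `ℝ/ℤ` is ordered if it lifts to reals
`t₁ < t₂ < t₃ < t₄ < t₁ + 1`. -/
def Ordered4 (a b c d : Circle1) : Prop :=
  ∃ t₁ t₂ t₃ t₄ : ℝ, t₁ < t₂ ∧ t₂ < t₃ ∧ t₃ < t₄ ∧ t₄ < t₁ + 1 ∧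
    a = (t₁ : Circle1) ∧ b = (t₂ : Circle1) ∧ c = (t₃ : Circle1) ∧ d = (t₄ : Circle1)

/-- `R` is an anti-symmetric cross ratio: bounded on pairwise distinct quadruples,
anti-symmetric in the first pair and under exchanging the two pairs, additive (cocycle)
in the first pair, and extended by `0` to the degenerate quadruples. -/
def IsCrossRatio {X : Type*} (R : X → X → X → X → ℝ) : Prop :=
  (∃ M, ∀ a b c d, PD4 a b c d → |R a b c d| ≤ M) ∧
  (∀ a b c d, PD4 a b c d → R a b c d = - R b a c d) ∧
  (∀ a b c d, PD4 a b c d → R c d a b = - R a b c d) ∧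
  (∀ a b b' c d, PD5 a b b' c d → R a b c d + R b b' c d = R a b' c d) ∧
  (∀ a b c, PD3 a b c → R a a b c = 0) ∧
  (∀ a b c, PD3 a b c → R b c a a = 0)

section CircularOrder

variable {X : Type*} {a b c d : X}

/-- The quadruple `(a, b, c, d)` is cyclically ordered: seen from `a`, the point `b` comes before
`c` and `c` before `d`. This is the four-point analogue of `sbtw`, encoded by two triples sharing
the base point `a`. -/
def CyclicallyOrdered [SBtw X] (a b c d : X) : Prop :=
  sbtw a b c ∧ sbtw a c d

section CircularPreorder

variable [CircularPreorder X]

theorem pd3_of_sbtw (h : sbtw a b c) : PD3 a b c := by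
  refine ⟨?_, ?_, ?_⟩ <;> rintro rfl
  exacts [sbtw_irrefl_left h, sbtw_irrefl_left_right h, sbtw_irrefl_right h]

namespace CyclicallyOrdered

theorem sbtw_left_right (h : CyclicallyOrdered a b c d) : sbtw a b d :=
  h.1.trans_right h.2

theorem rotate (h : CyclicallyOrdered a b c d) : CyclicallyOrdered b c d a :=
  ⟨(h.2.cyclic_left.trans_right h.1.cyclic_right).cyclic_right, h.sbtw_left_right.cyclic_left⟩

theorem pd4 (h : CyclicallyOrdered a b c d) : PD4 a b c d := by
  obtain ⟨hab, hac, hbc⟩ := pd3_of_sbtw h.1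
  obtain ⟨-, had, hcd⟩ := pd3_of_sbtw h.2
  exact ⟨hab, hac, had, hbc, (pd3_of_sbtw h.sbtw_left_right).2.2, hcd⟩

end CyclicallyOrdered

end CircularPreorder

variable [CircularOrder X]

theorem PD3.sbtw_or_sbtw (h : PD3 a b c) : sbtw a b c ∨ sbtw a c b := by
  by_cases habc : sbtw a b c
  · exact .inl habc
  · have hcba : btw c b a := btw_iff_not_sbtw.2 habc
    refine .inr (hcba.sbtw_of_not_btw fun habc' => ?_).cyclic_right
    rcases habc'.antisymm hcba with hab | hbc | hca
    exacts [h.1 hab, h.2.2 hbc, h.2.1 hca.symm]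

/-- In the first four cases the pairs `{a, b}` and `{c, d}` are unlinked, in the last two they are
linked. -/
theorem PD4.cyclicallyOrdered_cases (h : PD4 a b c d) :
    CyclicallyOrdered a b c d ∨ CyclicallyOrdered b a c d ∨
      CyclicallyOrdered a b d c ∨ CyclicallyOrdered b a d c ∨
      CyclicallyOrdered a c b d ∨ CyclicallyOrdered a d b c := by
  obtain ⟨hab, hac, had, hbc, hbd, hcd⟩ := h
  rcases PD3.sbtw_or_sbtw ⟨hab, hac, hbc⟩ with habc | hacb <;>
    rcases PD3.sbtw_or_sbtw ⟨hab, had, hbd⟩ with habd | hadb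
  · rcases PD3.sbtw_or_sbtw ⟨hac, had, hcd⟩ with hacd | hadc
    · exact .inl ⟨habc, hacd⟩
    · exact .inr (.inr (.inl ⟨habd, hadc⟩))
  · exact .inr (.inr (.inr (.inr (.inr ⟨hadb, habc⟩))))
  · exact .inr (.inr (.inr (.inr (.inl ⟨hacb, habd⟩))))
  · rcases PD3.sbtw_or_sbtw ⟨hbc, hbd, hcd⟩ with hbcd | hbdc
    · exact .inr (.inl ⟨hacb.cyclic_right, hbcd⟩)
    · exact .inr (.inr (.inr (.inl ⟨hadb.cyclic_right, hbdc⟩)))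

end CircularOrder

section CrossRatio

variable {X : Type*} {R S : X → X → X → X → ℝ} {a b c d e : X}

namespace PD4

theorem swap_pairs (h : PD4 a b c d) : PD4 c d a b := by
  unfold PD4 at *
  grind

theorem swap_left (h : PD4 a b c d) : PD4 b a c d := by
  unfold PD4 at *
  grind

end PD4

namespace IsCrossRatio

theorem swap_left (hR : IsCrossRatio R) (h : PD4 a b c d) : R b a c d = -R a b c d :=
  hR.2.1 b a c d h.swap_left

theorem swap_pairs (hR : IsCrossRatio R) (h : PD4 a b c d) : R c d a b = -R a b c d :=
  hR.2.2.1 a b c d h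

theorem swap_right (hR : IsCrossRatio R) (h : PD4 a b c d) : R a b d c = -R a b c d := by
  rw [hR.swap_pairs h.swap_pairs.swap_left, hR.swap_left h.swap_pairs, hR.swap_pairs h,
    neg_neg]

theorem add_left (hR : IsCrossRatio R) (hab : PD4 a b c d) (hbe : PD4 b e c d) (hae : a ≠ e) :
    R a b c d + R b e c d = R a e c d := by
  refine hR.2.2.2.1 a b e c d ?_
  unfold PD4 at hab hbe
  unfold PD5
  grind

theorem add_right (hR : IsCrossRatio R) (hcd : PD4 a b c d) (hde : PD4 a b d e) (hce : c ≠ e) :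
    R a b c d + R a b d e = R a b c e := by
  have hceab : PD4 c e a b := by
    unfold PD4 at *
    grind
  rw [hR.swap_pairs hcd.swap_pairs, hR.swap_pairs hde.swap_pairs, hR.swap_pairs hceab,
    ← hR.add_left hcd.swap_pairs hde.swap_pairs hce, neg_add]

variable [CircularOrder X]

theorem eq_const_mul_of_cyclicallyOrdered (hR : IsCrossRatio R) (hS : IsCrossRatio S) {k : ℝ}
    (hunlinked : ∀ a b c d, CyclicallyOrdered a b c d → R a b c d = k * S a b c d)
    (hlinked : ∀ a b c d, CyclicallyOrdered a c b d → R a b c d = k * S a b c d)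
    (h : PD4 a b c d) : R a b c d = k * S a b c d := by
  have of_swap_left (heq : R b a c d = k * S b a c d) : R a b c d = k * S a b c d := by
    rw [hR.swap_left h.swap_left, hS.swap_left h.swap_left, heq, mul_neg]
  have of_swap_right {a b : X} (h : PD4 a b c d) (heq : R a b d c = k * S a b d c) :
      R a b c d = k * S a b c d := by
    rwa [hR.swap_right h, hS.swap_right h, mul_neg, neg_inj] at heq
  rcases h.cyclicallyOrdered_cases with habcd | hbacd | habdc | hbadc | hacbd | hadbc
  · exact hunlinked _ _ _ _ habcd
  · exact of_swap_left (hunlinked _ _ _ _ hbacd)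
  · exact of_swap_right h (hunlinked _ _ _ _ habdc)
  · exact of_swap_left (of_swap_right h.swap_left (hunlinked _ _ _ _ hbadc))
  · exact hlinked _ _ _ _ hacbd
  · exact of_swap_right h (hlinked _ _ _ _ hadbc)

theorem eq_right_of_cyclicallyOrdered (hR : IsCrossRatio R)
    (hzero : ∀ a b c d, CyclicallyOrdered a b c d → R a b c d = 0)
    (hd : CyclicallyOrdered a c b d) (he : CyclicallyOrdered a c b e) :
    R a b c d = R a b c e := by
  have eq_of_sbtw {d e : X} (hd : CyclicallyOrdered a c b d) (he : CyclicallyOrdered a c b e)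
      (hade : sbtw a d e) : R a b c d = R a b c e := by
    have habde : CyclicallyOrdered a b d e := ⟨hd.2, hade⟩
    have habcd : PD4 a b c d := by
      have hacbd := hd.pd4
      unfold PD4 at *
      grind
    rw [← hR.add_right habcd habde.pd4 (pd3_of_sbtw he.sbtw_left_right).2.2,
      hzero _ _ _ _ habde, add_zero]
  rcases eq_or_ne d e with rfl | hde
  · rfl
  rcases PD3.sbtw_or_sbtw ⟨(pd3_of_sbtw hd.2).2.1, (pd3_of_sbtw he.2).2.1, hde⟩ with hade | haed
  · exact eq_of_sbtw hd he hade
  · exact (eq_of_sbtw he hd haed).symm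

end IsCrossRatio

end CrossRatio

section Action

/-- The elements of `H` act by maps preserving the cyclic order of triples. They need not form a
group: `H` is an arbitrary family of self-maps of `X`. -/
def PreservesSBtw (H X : Type*) [SMul H X] [SBtw X] : Prop :=
  ∀ (h : H) (a b c : X), sbtw a b c → sbtw (h • a) (h • b) (h • c)

/-- The maps in `H` act transitively on cyclically ordered triples. -/
def TransitiveOnSBtw (H X : Type*) [SMul H X] [SBtw X] : Prop :=
  ∀ a b c a' b' c' : X, sbtw a b c → sbtw a' b' c' →
    ∃ h : H, h • a = a' ∧ h • b = b' ∧ h • c = c'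

/-- Invariance of `R` under the diagonal action of `H` on quadruples of points. -/
def IsInvariantUnder (H : Type*) {X : Type*} [SMul H X] (R : X → X → X → X → ℝ) : Prop :=
  ∀ (h : H) (a b c d : X), R (h • a) (h • b) (h • c) (h • d) = R a b c d

variable {H X : Type*} [SMul H X] {R : X → X → X → X → ℝ} {a b c d a' b' c' d' : X}

namespace IsCrossRatio

section CircularPreorder

variable [CircularPreorder X]

theorem exists_eq_two_mul (hR : IsCrossRatio R) (horder : PreservesSBtw H X)
    (htrans : TransitiveOnSBtw H X) (hinv : IsInvariantUnder H R)
    (habcd : CyclicallyOrdered a b c d) :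
    ∃ b', CyclicallyOrdered a b' c d ∧ R a b' c d = 2 * R a b c d := by
  have hcdab : CyclicallyOrdered c d a b := habcd.rotate.rotate
  obtain ⟨h, hc, hd, hab⟩ := htrans c d a c d b hcdab.1 hcdab.sbtw_left_right
  have hcbb' : sbtw c b (h • b) := by simpa only [hc, hab] using horder h c a b hcdab.2
  have hcab' : sbtw c a (h • b) := hcdab.2.trans_right hcbb'
  have hcdbb' : CyclicallyOrdered c d b (h • b) := ⟨hcdab.sbtw_left_right, hcbb'⟩
  have hcdab' : CyclicallyOrdered c d a (h • b) := ⟨hcdab.1, hcab'⟩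
  have hshift : R b (h • b) c d = R a b c d := by simpa only [hc, hd, hab] using hinv h a b c d
  refine ⟨h • b, hcdab'.rotate.rotate, ?_⟩
  rw [← hR.add_left habcd.pd4 hcdbb'.pd4.swap_pairs (pd3_of_sbtw hcab').2.2, hshift, two_mul]

theorem eq_zero_of_cyclicallyOrdered (hR : IsCrossRatio R) (horder : PreservesSBtw H X)
    (htrans : TransitiveOnSBtw H X) (hinv : IsInvariantUnder H R)
    (habcd : CyclicallyOrdered a b c d) : R a b c d = 0 := by
  obtain ⟨M, hM⟩ := hR.1
  have hpow (n : ℕ) : ∃ b', CyclicallyOrdered a b' c d ∧ R a b' c d = 2 ^ n * R a b c d := by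
    induction n with
    | zero => exact ⟨b, habcd, by rw [pow_zero, one_mul]⟩
    | succ n ih =>
      obtain ⟨b', hb', hval⟩ := ih
      obtain ⟨b'', hb'', hdouble⟩ := hR.exists_eq_two_mul horder htrans hinv hb'
      exact ⟨b'', hb'', by rw [hdouble, hval, pow_succ', mul_assoc]⟩
  have hbound (n : ℕ) : 2 ^ n * |R a b c d| ≤ M := by
    obtain ⟨b', hb', hval⟩ := hpow n
    simpa [hval, abs_mul] using hM a b' c d hb'.pd4
  by_contra hne
  obtain ⟨n, hn⟩ := pow_unbounded_of_one_lt (M / |R a b c d|) one_lt_two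
  exact (hbound n).not_gt ((div_lt_iff₀ (abs_pos.2 hne)).1 hn)

end CircularPreorder

theorem eq_of_cyclicallyOrdered [CircularOrder X] (hR : IsCrossRatio R) (horder : PreservesSBtw H X)
    (htrans : TransitiveOnSBtw H X) (hinv : IsInvariantUnder H R)
    (h : CyclicallyOrdered a c b d) (h' : CyclicallyOrdered a' c' b' d') :
    R a b c d = R a' b' c' d' := by
  obtain ⟨g, rfl, rfl, rfl⟩ := htrans a c b a' c' b' h.1 h'.1
  have hg : CyclicallyOrdered (g • a) (g • c) (g • b) (g • d) :=
    ⟨horder g a c b h.1, horder g a b d h.2⟩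
  calc
    R a b c d = R (g • a) (g • b) (g • c) (g • d) := (hinv g a b c d).symm
    _ = R (g • a) (g • b) (g • c) d' :=
      hR.eq_right_of_cyclicallyOrdered
        (fun _ _ _ _ => hR.eq_zero_of_cyclicallyOrdered horder htrans hinv) hg h'

end IsCrossRatio

theorem stmt8_general [CircularOrder X] (horder : PreservesSBtw H X) (htrans : TransitiveOnSBtw H X)
    (R : X → X → X → X → ℝ) (hR : IsCrossRatio R) (hinv : IsInvariantUnder H R)
    (R₀ : X → X → X → X → ℝ) (hR₀ : IsCrossRatio R₀)
    (hR₀0 : ∀ a b c d, CyclicallyOrdered a b c d → R₀ a b c d = 0)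
    (hR₀1 : ∀ a b c d, CyclicallyOrdered a c b d → R₀ a b c d = 1) :
    ∃ k : ℝ,
      (∀ a b c d, PD4 a b c d → R a b c d = k * R₀ a b c d) ∧
      (∀ a b c d, CyclicallyOrdered a b c d → R a b c d = 0) ∧
      (∀ a b c d, CyclicallyOrdered a c b d → R a b c d = k) := by
  have hzero (a b c d : X) (h : CyclicallyOrdered a b c d) : R a b c d = 0 :=
    hR.eq_zero_of_cyclicallyOrdered horder htrans hinv h
  obtain ⟨k, hk⟩ : ∃ k, ∀ a b c d, CyclicallyOrdered a c b d → R a b c d = k := by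
    by_cases hex : ∃ a b c d : X, CyclicallyOrdered a c b d
    · obtain ⟨a₀, b₀, c₀, d₀, h₀⟩ := hex
      exact ⟨R a₀ b₀ c₀ d₀, fun a b c d h => hR.eq_of_cyclicallyOrdered horder htrans hinv h h₀⟩
    · exact ⟨0, fun a b c d h => (hex ⟨a, b, c, d, h⟩).elim⟩
  refine ⟨k, fun a b c d => hR.eq_const_mul_of_cyclicallyOrdered hR₀ ?_ ?_, hzero, hk⟩
  · intro a b c d h
    rw [hzero a b c d h, hR₀0 a b c d h, mul_zero]
  · intro a b c d h
    rw [hk a b c d h, hR₀1 a b c d h, mul_one]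

end Action

section AddCircle

open Set

variable {𝕜 : Type*} [AddCommGroup 𝕜] [LinearOrder 𝕜] [IsOrderedAddMonoid 𝕜] [Archimedean 𝕜]
  {p : 𝕜} [Fact (0 < p)]

theorem sbtw_coe_iff_lt {s t u : 𝕜} (ht : t ∈ Ioo s (s + p)) (hu : u ∈ Ioo s (s + p)) :
    sbtw (s : AddCircle p) t u ↔ t < u := by
  have hp : 0 < p := Fact.out
  rw [sbtw_iff_not_btw, btw_cyclic, QuotientAddGroup.btw_coe_iff, not_le,
    (toIocMod_eq_self hp).2 (Ioo_subset_Ioc_self ht),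
    (toIcoMod_eq_self hp).2 (Ioo_subset_Ico_self hu)]

theorem exists_mem_Ioo_coe_eq {s : 𝕜} {x : AddCircle p} (hx : (s : AddCircle p) ≠ x) :
    ∃ t ∈ Ioo s (s + p), (t : AddCircle p) = x := by
  obtain ⟨t, ht, rfl⟩ : x ∈ ((↑) : 𝕜 → AddCircle p) '' Ico s (s + p) :=
    AddCircle.coe_image_Ico_eq p s ▸ mem_univ x
  exact ⟨t, ⟨ht.1.lt_of_ne fun hst => hx (congrArg _ hst), ht.2⟩, rfl⟩

end AddCircle

section Circle1

variable {a b c d : Circle1}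

theorem ordered3_iff_sbtw : Ordered3 a b c ↔ sbtw a b c := by
  constructor
  · rintro ⟨s, t, u, hst, htu, hus, rfl, rfl, rfl⟩
    exact (sbtw_coe_iff_lt ⟨hst, htu.trans hus⟩ ⟨hst.trans htu, hus⟩).2 htu
  · intro h
    obtain ⟨s, rfl⟩ := QuotientAddGroup.mk_surjective a
    obtain ⟨hab, hac, -⟩ := pd3_of_sbtw h
    obtain ⟨t, ht, rfl⟩ := exists_mem_Ioo_coe_eq hab
    obtain ⟨u, hu, rfl⟩ := exists_mem_Ioo_coe_eq hac
    exact ⟨s, t, u, ht.1, (sbtw_coe_iff_lt ht hu).1 h, hu.2, rfl, rfl, rfl⟩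

theorem ordered4_iff_cyclicallyOrdered : Ordered4 a b c d ↔ CyclicallyOrdered a b c d := by
  constructor
  · rintro ⟨s, t, u, v, hst, htu, huv, hvs, rfl, rfl, rfl, rfl⟩
    exact ⟨ordered3_iff_sbtw.1 ⟨s, t, u, hst, htu, huv.trans hvs, rfl, rfl, rfl⟩,
      ordered3_iff_sbtw.1 ⟨s, u, v, hst.trans htu, huv, hvs, rfl, rfl, rfl⟩⟩
  · intro h
    obtain ⟨s, rfl⟩ := QuotientAddGroup.mk_surjective a
    obtain ⟨hab, hac, had, -⟩ := h.pd4
    obtain ⟨t, ht, rfl⟩ := exists_mem_Ioo_coe_eq hab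
    obtain ⟨u, hu, rfl⟩ := exists_mem_Ioo_coe_eq hac
    obtain ⟨v, hv, rfl⟩ := exists_mem_Ioo_coe_eq had
    exact ⟨s, t, u, v, ht.1, (sbtw_coe_iff_lt ht hu).1 h.1, (sbtw_coe_iff_lt hu hv).1 h.2, hv.2,
      rfl, rfl, rfl, rfl⟩

end Circle1

/-- if a group `H` acts on the circle `ℝ/ℤ` preserving ordered triples and
transitively on ordered triples, then every `H`-invariant anti-symmetric cross ratio
`R` is a constant multiple `k` of the cross ratio `R₀`; in particular `R` vanishes on
ordered quadruples and equals `k` on quadruples `(a,b,c,d)` with `(a,c,b,d)` ordered. -/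
theorem stmt8 {H : Type*} [Group H] [MulAction H Circle1]
    (horder : ∀ (h : H) (a b c : Circle1),
      Ordered3 a b c → Ordered3 (h • a) (h • b) (h • c))
    (htrans : ∀ a b c a' b' c' : Circle1, Ordered3 a b c → Ordered3 a' b' c' →
      ∃ h : H, h • a = a' ∧ h • b = b' ∧ h • c = c')
    (R : Circle1 → Circle1 → Circle1 → Circle1 → ℝ)
    (hR : IsCrossRatio R)
    (hinv : ∀ (h : H) (a b c d : Circle1),
      R (h • a) (h • b) (h • c) (h • d) = R a b c d)
    (R₀ : Circle1 → Circle1 → Circle1 → Circle1 → ℝ)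
    (hR₀ : IsCrossRatio R₀)
    (hR₀0 : ∀ a b c d, Ordered4 a b c d → R₀ a b c d = 0)
    (hR₀1 : ∀ a b c d, Ordered4 a c b d → R₀ a b c d = 1) :
    ∃ k : ℝ,
      (∀ a b c d, PD4 a b c d → R a b c d = k * R₀ a b c d) ∧
      (∀ a b c d, Ordered4 a b c d → R a b c d = 0) ∧
      (∀ a b c d, Ordered4 a c b d → R a b c d = k) := by
  simp only [ordered3_iff_sbtw, ordered4_iff_cyclicallyOrdered] at *
  exact stmt8_general horder htrans R hR hinv R₀ hR₀ hR₀0 hR₀1
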